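/- Let 0 < s < 1. For every quaternion q ∈ ℍ, writing x = Re(q) and y = ‖Im(q)‖, the series ∑_{n=0}^∞ b_n(s)^{−1} · H_n(q) · star(H_n(q)) converges in ℍ, and its sum equals the real scalar ((1−s²)/(2πs)) · exp( (1−s)·x² + ((1−s)/s)·y² ) times the identity; that is, the diagonal quaternionic kernel K_s(q, conj q) equals K_s(z_q, conj z_q)·1 with z_q = x + iy. -/

import Mathlib

open Quaternion Polynomial Real

/-- The physicists' Hermite polynomials: `H 0 = 1`, `H (n+1) = 2X * H n - (H n)'`. -/
noncomputable def physHermite : ℕ → Polynomial ℝ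
  | 0 => 1
  | n + 1 => 2 * Polynomial.X * physHermite n - Polynomial.derivative (physHermite n)

/-- The normalization constant `b_n(s) = (π√s/(1−s)) (2(1+s)/(1−s))^n n!`. -/
noncomputable def bn (s : ℝ) (n : ℕ) : ℝ :=
  Real.pi * Real.sqrt s / (1 - s) * (2 * (1 + s) / (1 - s)) ^ n * n.factorial

open MeasureTheory

lemma C_two_eq : (C 2 : ℝ[X]) = 2 := rfl

lemma aeval_two_eq (z : ℂ) : aeval z (2 : ℝ[X]) = 2 := by
  rw [← C_two_eq, aeval_C]; simp

lemma physHermite_derivative (n : ℕ) :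
    derivative (physHermite (n + 1)) = C (2 * ((n : ℝ) + 1)) * physHermite n := by
  induction n with
  | zero => simp [physHermite, C_two_eq]
  | succ k ih =>
    have e : physHermite (k + 1 + 1)
        = 2 * X * physHermite (k + 1) - derivative (physHermite (k + 1)) := rfl
    have e' : physHermite (k + 1)
        = 2 * X * physHermite k - derivative (physHermite k) := rfl
    rw [e, derivative_sub, ih, derivative_C_mul, derivative_mul, ih]
    have : derivative (2 * X : ℝ[X]) = 2 := by
      rw [derivative_mul]; simp
    rw [this]
    have hd : derivative (physHermite k) = 2 * X * physHermite k - physHermite (k + 1) := by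
      rw [e']; ring
    rw [hd]
    simp only [C_mul, C_add, Nat.cast_add, Nat.cast_one, C_1]
    have h2 : (C 2 : ℝ[X]) = 2 := rfl
    rw [h2]
    ring

lemma physHermite_rec (n : ℕ) (z : ℂ) :
    aeval z (physHermite (n + 2)) = 2 * z * aeval z (physHermite (n + 1))
      - 2 * ((n : ℂ) + 1) * aeval z (physHermite n) := by
  have e : physHermite (n + 2)
      = 2 * X * physHermite (n + 1) - derivative (physHermite (n + 1)) := rfl
  rw [e, physHermite_derivative]
  simp [aeval_two_eq]

lemma gauss_integrable (t : ℝ) (ht : t < 1) (z : ℂ) :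
    Integrable (fun u : ℝ => Real.exp (t * ‖z + Complex.I * u‖ ^ 2) * Real.exp (-u ^ 2)) := by
  have h := (integrable_cexp_quadratic (b := ((1 - t : ℝ) : ℂ))
    (by simpa using ht) ((2 * t * z.im : ℝ) : ℂ)
    ((t * (z.re ^ 2 + z.im ^ 2) : ℝ) : ℂ)).norm
  refine h.congr (Filter.Eventually.of_forall fun u => ?_)
  simp only [Complex.norm_exp]
  rw [← Real.exp_add, Complex.sq_norm, Complex.normSq_apply]
  congr 1
  norm_cast
  simp
  ring

lemma norm_cexp_gauss (u : ℝ) : ‖Complex.exp (-(u : ℂ) ^ 2)‖ = Real.exp (-u ^ 2) := by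
  rw [Complex.norm_exp]; norm_cast

lemma poly_integrable (n : ℕ) (z : ℂ) :
    Integrable (fun u : ℝ => (2 * (z + Complex.I * u)) ^ n * Complex.exp (-(u : ℂ) ^ 2)) := by
  refine ((gauss_integrable (1 / 2) (by norm_num) z).const_mul
    (n.factorial * Real.exp 2)).mono' (by fun_prop) (Filter.Eventually.of_forall fun u => ?_)
  rw [norm_mul, norm_cexp_gauss, norm_pow, ← mul_assoc]
  gcongr
  have h := Real.pow_div_factorial_le_exp _ (norm_nonneg (2 * (z + Complex.I * u))) n
  rw [div_le_iff₀ (by positivity)] at h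
  refine h.trans ?_
  rw [mul_comm, mul_assoc, ← Real.exp_add]
  gcongr
  rw [norm_mul, Complex.norm_ofNat]
  nlinarith [sq_nonneg (‖z + Complex.I * u‖ - 2)]

/-- Un-normalised integral representation. -/
lemma hermite_integral (n : ℕ) (z : ℂ) :
    ∫ u : ℝ, (2 * (z + Complex.I * u)) ^ n * Complex.exp (-(u : ℂ) ^ 2)
      = (Real.sqrt π : ℂ) * aeval z (physHermite n) := by
  have key : ∀ m : ℕ, ∫ u : ℝ, (2 * (z + Complex.I * u)) ^ (m + 1) * Complex.exp (-(u : ℂ) ^ 2)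
      = 2 * z * (∫ u : ℝ, (2 * (z + Complex.I * u)) ^ m * Complex.exp (-(u : ℂ) ^ 2))
      - 2 * m * ∫ u : ℝ, (2 * (z + Complex.I * u)) ^ (m - 1) * Complex.exp (-(u : ℂ) ^ 2) := by
    intro m
    have i1 := poly_integrable (m + 1) z
    have i2 := (poly_integrable m z).const_mul (2 * z)
    have i3 := (poly_integrable (m - 1) z).const_mul (2 * (m : ℂ))
    have hz := integral_eq_zero_of_hasDerivAt_of_integrable
      (f := fun u : ℝ => Complex.I * ((2 * (z + Complex.I * u)) ^ m * Complex.exp (-(u : ℂ) ^ 2)))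
      (f' := fun u : ℝ =>
        (2 * z * ((2 * (z + Complex.I * u)) ^ m * Complex.exp (-(u : ℂ) ^ 2))
        - 2 * (m : ℂ) * ((2 * (z + Complex.I * u)) ^ (m - 1) * Complex.exp (-(u : ℂ) ^ 2)))
        - (2 * (z + Complex.I * u)) ^ (m + 1) * Complex.exp (-(u : ℂ) ^ 2))
      (by
        intro u
        have h0 : HasDerivAt (fun u : ℝ => (u : ℂ)) 1 u := Complex.ofRealCLM.hasDerivAt
        have h1 := ((((h0.const_mul Complex.I).const_add z).const_mul 2).fun_pow m)
        have h2 := ((h0.fun_pow 2).fun_neg).cexp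
        have h3 := (h1.fun_mul h2).const_mul Complex.I
        refine h3.congr_deriv ?_
        have hI : Complex.I * Complex.I = -1 := Complex.I_mul_I
        rw [pow_succ _ m]
        simp only [Nat.cast_ofNat, Nat.add_one_sub_one, pow_one, mul_one]
        generalize Complex.exp (-(u : ℂ) ^ 2) = E
        linear_combination (2 * m * (2 * (z + Complex.I * u)) ^ (m - 1) * E) * hI)
      ((i2.sub i3).sub i1) ((poly_integrable m z).const_mul _)
    rw [integral_sub (by exact i2.sub i3) i1, integral_sub i2 i3, integral_const_mul,
      integral_const_mul] at hz
    linear_combination -hz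
  have h0 : ∫ u : ℝ, (2 * (z + Complex.I * u)) ^ 0 * Complex.exp (-(u : ℂ) ^ 2)
      = (Real.sqrt π : ℂ) := by
    have := integral_gaussian 1
    rw [div_one] at this
    rw [← this, ← integral_complex_ofReal]
    congr 1; ext u
    push_cast; simp
  induction n using Nat.twoStepInduction with
  | zero => rw [h0]; simp [physHermite]
  | one => rw [key 0, h0]; simp [physHermite, aeval_two_eq]; ring
  | more k ih1 ih2 =>
    rw [key (k + 1), ih2, Nat.add_sub_cancel, ih1, physHermite_rec]
    push_cast; ring

lemma hasSum_cexp (x : ℂ) : HasSum (fun n : ℕ => x ^ n / n.factorial) (Complex.exp x) := by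
  rw [Complex.exp_eq_exp_ℂ]; exact NormedSpace.expSeries_div_hasSum_exp x

lemma hasSum_rexp (x : ℝ) : HasSum (fun n : ℕ => x ^ n / n.factorial) (Real.exp x) := by
  rw [Real.exp_eq_exp_ℝ]; exact NormedSpace.expSeries_div_hasSum_exp x

lemma cpow_half_eq (a : ℝ) (ha : 0 ≤ a) : (a : ℂ) ^ (1 / 2 : ℂ) = (Real.sqrt a : ℂ) := by
  rw [Real.sqrt_eq_rpow, Complex.ofReal_cpow ha]; norm_num

/-- The Mehler formula. -/
lemma mehler (t : ℝ) (ht0 : 0 < t) (ht1 : t < 1) (z w : ℂ) :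
    HasSum (fun n : ℕ => ((t / 2 : ℂ) ^ n / n.factorial) *
        (aeval z (physHermite n) * aeval w (physHermite n)))
      ((1 / Real.sqrt (1 - t ^ 2) : ℝ) *
        Complex.exp ((2 * t * z * w - t ^ 2 * (z ^ 2 + w ^ 2)) / (1 - t ^ 2))) := by
  have hpos : 0 < 1 - t ^ 2 := by nlinarith
  have hdom : Integrable (fun p : ℝ × ℝ =>
      (Real.exp (t * ‖z + Complex.I * p.1‖ ^ 2) * Real.exp (-p.1 ^ 2)) *
      (Real.exp (t * ‖w + Complex.I * p.2‖ ^ 2) * Real.exp (-p.2 ^ 2))) (volume.prod volume) :=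
    (gauss_integrable t ht1 z).mul_prod (gauss_integrable t ht1 w)
  have hle : ∀ p : ℝ × ℝ,
      Real.exp (2 * t * (‖z + Complex.I * p.1‖ * ‖w + Complex.I * p.2‖)) *
        (Real.exp (-p.1 ^ 2) * Real.exp (-p.2 ^ 2)) ≤
      (Real.exp (t * ‖z + Complex.I * p.1‖ ^ 2) * Real.exp (-p.1 ^ 2)) *
      (Real.exp (t * ‖w + Complex.I * p.2‖ ^ 2) * Real.exp (-p.2 ^ 2)) := by
    intro p
    simp only [← Real.exp_add]
    apply Real.exp_le_exp.2
    nlinarith [mul_nonneg ht0.le (sq_nonneg (‖z + Complex.I * p.1‖ - ‖w + Complex.I * p.2‖))]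
  set f : ℝ × ℝ → ℂ := fun p =>
    Complex.exp (2 * t * ((z + Complex.I * p.1) * (w + Complex.I * p.2))) *
      (Complex.exp (-(p.1 : ℂ) ^ 2) * Complex.exp (-(p.2 : ℂ) ^ 2)) with hf
  have hfint : Integrable f (volume.prod volume) := by
    refine hdom.mono' (by fun_prop) (Filter.Eventually.of_forall fun p => ?_)
    refine le_trans ?_ (hle p)
    rw [hf]
    simp only [norm_mul, norm_cexp_gauss]
    gcongr
    refine (Complex.norm_exp_le_exp_norm _).trans (le_of_eq ?_)
    simp [abs_of_pos ht0]
  have hS := hasSum_integral_of_dominated_convergence (μ := (volume : Measure ℝ).prod volume)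
    (F := fun (n : ℕ) (p : ℝ × ℝ) => ((t / 2 : ℂ) ^ n / n.factorial) *
      (((2 * (z + Complex.I * p.1)) ^ n * Complex.exp (-(p.1 : ℂ) ^ 2)) *
       ((2 * (w + Complex.I * p.2)) ^ n * Complex.exp (-(p.2 : ℂ) ^ 2))))
    (f := f)
    (fun n p => ((2 * t * (‖z + Complex.I * p.1‖ * ‖w + Complex.I * p.2‖)) ^ n / n.factorial) *
        (Real.exp (-p.1 ^ 2) * Real.exp (-p.2 ^ 2)))
    (fun n => by fun_prop)
    (fun n => Filter.Eventually.of_forall fun p => by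
      apply le_of_eq
      simp only [norm_mul, norm_cexp_gauss, norm_div, norm_pow, Complex.norm_ofNat,
        Complex.norm_real, Complex.norm_natCast, Real.norm_of_nonneg ht0.le]
      rw [show 2 * t * (‖z + Complex.I * p.1‖ * ‖w + Complex.I * p.2‖)
        = (t / 2) * (2 * ‖z + Complex.I * p.1‖) * (2 * ‖w + Complex.I * p.2‖) by ring,
        mul_pow (t / 2 * _), mul_pow (t / 2)]
      ring)
    (Filter.Eventually.of_forall fun p => ((hasSum_rexp _).mul_right _).summable)
    (by
      simp only [fun p : ℝ × ℝ => ((hasSum_rexp (2 * t * (‖z + Complex.I * p.1‖ *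
        ‖w + Complex.I * p.2‖))).mul_right
          (Real.exp (-p.1 ^ 2) * Real.exp (-p.2 ^ 2))).tsum_eq]
      refine hdom.mono' (by fun_prop) (Filter.Eventually.of_forall fun p => ?_)
      rw [Real.norm_of_nonneg (by positivity)]
      exact hle p)
    (Filter.Eventually.of_forall fun p => by
      refine ((hasSum_cexp _).mul_right _).congr_fun ?_
      intro n
      rw [show 2 * (t : ℂ) * ((z + Complex.I * p.1) * (w + Complex.I * p.2))
        = (t / 2) * (2 * (z + Complex.I * p.1)) * (2 * (w + Complex.I * p.2)) by ring,
        mul_pow ((t : ℂ) / 2 * _), mul_pow ((t : ℂ) / 2)]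
      ring)
  have hIval : ∫ p, f p ∂((volume : Measure ℝ).prod volume) =
      π * ((1 / Real.sqrt (1 - t ^ 2) : ℝ) *
        Complex.exp ((2 * t * z * w - t ^ 2 * (z ^ 2 + w ^ 2)) / (1 - t ^ 2))) := by
    rw [integral_prod _ hfint]
    have inner : ∀ u : ℝ, ∫ v : ℝ, f (u, v) = Real.sqrt π *
        Complex.exp (((t ^ 2 - 1 : ℝ) : ℂ) * (u : ℂ) ^ 2
          + (2 * t * Complex.I * (w - t * z)) * u + (2 * t * z * w - t ^ 2 * z ^ 2)) := by
      intro u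
      have := integral_cexp_quadratic (b := -1) (by simp)
        (2 * t * Complex.I * (z + Complex.I * u))
        (2 * t * (z + Complex.I * u) * w - (u : ℂ) ^ 2)
      rw [neg_neg, div_one, cpow_half_eq π pi_pos.le] at this
      refine Eq.trans ?_ (this.trans ?_)
      rotate_left
      · congr 2
        push_cast
        have hI : Complex.I ^ 2 = -1 := Complex.I_sq
        linear_combination (t ^ 2 * z ^ 2 + 2 * t ^ 2 * z * u * Complex.I
          + t ^ 2 * u ^ 2 * (Complex.I ^ 2 - 1)) * hI
      · congr 1; ext v
        simp only [hf, ← Complex.exp_add]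
        congr 1
        ring
    simp only [inner]
    rw [integral_const_mul, integral_cexp_quadratic (by rw [Complex.ofReal_re]; linarith)]
    have e1 : (π : ℂ) / -((t ^ 2 - 1 : ℝ) : ℂ) = ((π / (1 - t ^ 2) : ℝ) : ℂ) := by
      push_cast; ring
    rw [e1, cpow_half_eq _ (by positivity), Real.sqrt_div pi_pos.le]
    have hne : (1 : ℂ) - t ^ 2 ≠ 0 := by exact_mod_cast hpos.ne'
    have hne' : (t : ℂ) ^ 2 - 1 ≠ 0 := by
      intro h; apply hne; linear_combination -h
    have e2 : 2 * t * z * w - t ^ 2 * z ^ 2 - (2 * t * Complex.I * (w - t * z)) ^ 2 /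
        (4 * ((t ^ 2 - 1 : ℝ) : ℂ)) =
        (2 * t * z * w - t ^ 2 * (z ^ 2 + w ^ 2)) / (1 - t ^ 2) := by
      rw [mul_pow, mul_pow _ Complex.I, Complex.I_sq]
      push_cast
      rw [show (1 : ℂ) - t ^ 2 = -(t ^ 2 - 1) by ring]
      field_simp
      ring
    rw [e2]
    have e3 : (Real.sqrt π : ℂ) * Real.sqrt π = π := by
      exact_mod_cast Real.mul_self_sqrt pi_pos.le
    push_cast
    rw [← e3]; ring
  rw [hIval] at hS
  have hpi : (π : ℂ) ≠ 0 := by exact_mod_cast pi_pos.ne'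
  have hS' := hS.mul_left (π : ℂ)⁻¹
  rw [inv_mul_cancel_left₀ hpi] at hS'
  refine hS'.congr_fun fun n => ?_
  rw [integral_const_mul, integral_prod_mul
    (fun u : ℝ => (2 * (z + Complex.I * u)) ^ n * Complex.exp (-(u : ℂ) ^ 2))
    (fun u : ℝ => (2 * (w + Complex.I * u)) ^ n * Complex.exp (-(u : ℂ) ^ 2)),
    hermite_integral, hermite_integral]
  have e3 : (Real.sqrt π : ℂ) * Real.sqrt π = π := by
    exact_mod_cast Real.mul_self_sqrt pi_pos.le
  rw [eq_inv_mul_iff_mul_eq₀ hpi]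
  linear_combination (-((t / 2 : ℂ) ^ n / n.factorial) *
    (aeval z (physHermite n)) * aeval w (physHermite n)) * e3

/-- The quaternion unit `i`. -/
noncomputable def quatI : ℍ[ℝ] := ⟨0, 1, 0, 0⟩

lemma quatI_re : quatI.re = 0 := rfl
lemma quatI_imI : quatI.imI = 1 := rfl
lemma quatI_imJ : quatI.imJ = 0 := rfl
lemma quatI_imK : quatI.imK = 0 := rfl

/-- Every quaternion lies in a slice. -/
lemma exists_unit (q : ℍ[ℝ]) : ∃ u : ℍ[ℝ], u * u = -1 ∧ star u = -u ∧ q.im = ‖q.im‖ • u := by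
  by_cases h : q.im = 0
  · refine ⟨quatI, ?_, ?_, by rw [h, norm_zero, zero_smul]⟩
    · apply Quaternion.ext <;> simp [quatI_re, quatI_imI, quatI_imJ, quatI_imK]
    · apply Quaternion.ext <;> simp [quatI_re, quatI_imI, quatI_imJ, quatI_imK]
  · have hn : ‖q.im‖ ≠ 0 := norm_ne_zero_iff.2 h
    refine ⟨‖q.im‖⁻¹ • q.im, ?_, ?_, ?_⟩
    · rw [smul_mul_smul_comm, ← pow_two q.im, Quaternion.im_sq, Quaternion.normSq_eq_norm_mul_self]
      ext <;> simp
      field_simp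
    · rw [Quaternion.star_smul, Quaternion.star_im]; simp
    · rw [smul_smul, mul_inv_cancel₀ hn, one_smul]

lemma complex_kernel (s : ℝ) (hs0 : 0 < s) (hs1 : s < 1) (z : ℂ) :
    HasSum (fun n : ℕ => (bn s n)⁻¹ •
        (aeval z (physHermite n) * aeval (star z) (physHermite n)))
      (((1 - s ^ 2) / (2 * Real.pi * s) *
          Real.exp ((1 - s) * z.re ^ 2 + (1 - s) / s * z.im ^ 2)) • (1 : ℂ)) := by
  have h1 : 0 < 1 - s := by linarith
  have h2 : 0 < 1 + s := by linarith
  have hsq := Real.sqrt_pos.2 hs0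
  have hss := Real.mul_self_sqrt hs0.le
  have hM := (mehler ((1 - s) / (1 + s)) (by positivity) (by rw [div_lt_one h2]; linarith)
    z (star z)).mul_left (((1 - s) / (π * Real.sqrt s) : ℝ) : ℂ)
  suffices hv : (((1 - s ^ 2) / (2 * Real.pi * s) *
      Real.exp ((1 - s) * z.re ^ 2 + (1 - s) / s * z.im ^ 2)) • (1 : ℂ)) =
      (((1 - s) / (π * Real.sqrt s) : ℝ) : ℂ) *
      ((1 / Real.sqrt (1 - ((1 - s) / (1 + s)) ^ 2) : ℝ) *
        Complex.exp ((2 * (((1 - s) / (1 + s) : ℝ) : ℂ) * z * star z -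
        (((1 - s) / (1 + s) : ℝ) : ℂ) ^ 2 * (z ^ 2 + star z ^ 2)) /
        (1 - (((1 - s) / (1 + s) : ℝ) : ℂ) ^ 2))) by
    rw [hv]
    refine hM.congr_fun ?_
    intro n
    rw [Complex.real_smul]
    have : (bn s n)⁻¹ = (1 - s) / (π * Real.sqrt s) *
        (((1 - s) / (1 + s) / 2) ^ n / n.factorial) := by
      unfold bn
      rw [div_pow, div_pow, div_pow, mul_pow]
      field_simp
    rw [this]; push_cast; ring
  · have e1 : 1 - ((1 - s) / (1 + s)) ^ 2 = (2 * Real.sqrt s / (1 + s)) ^ 2 := by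
      rw [div_pow, div_pow, mul_pow, Real.sq_sqrt hs0.le]; field_simp; ring
    have e2 : Real.sqrt (1 - ((1 - s) / (1 + s)) ^ 2) = 2 * Real.sqrt s / (1 + s) := by
      rw [e1, Real.sqrt_sq (by positivity)]
    have e3 : (2 * (((1 - s) / (1 + s) : ℝ) : ℂ) * z * star z -
        (((1 - s) / (1 + s) : ℝ) : ℂ) ^ 2 * (z ^ 2 + star z ^ 2)) /
        (1 - (((1 - s) / (1 + s) : ℝ) : ℂ) ^ 2) =
        (((1 - s) * z.re ^ 2 + (1 - s) / s * z.im ^ 2 : ℝ) : ℂ) := by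
      have ea : z * star z = ((z.re ^ 2 + z.im ^ 2 : ℝ) : ℂ) := by
        apply Complex.ext <;> simp [pow_two]; ring
      have eb : z ^ 2 + star z ^ 2 = ((2 * (z.re ^ 2 - z.im ^ 2) : ℝ) : ℂ) := by
        apply Complex.ext <;> simp [pow_two] <;> ring
      rw [mul_assoc, ea, eb]
      norm_cast
      rw [e1, div_pow (2 * _), mul_pow, Real.sq_sqrt hs0.le]
      field_simp
      ring
    rw [e3, e2, ← Complex.ofReal_exp, Complex.real_smul, mul_one]
    norm_cast
    rw [← mul_assoc]
    congr 1
    field_simp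
    rw [Real.sq_sqrt hs0.le]
    ring

theorem quaternionic_diagonal_kernel (s : ℝ) (hs0 : 0 < s) (hs1 : s < 1) (q : ℍ[ℝ]) :
    HasSum
      (fun n : ℕ => (bn s n)⁻¹ •
        (Polynomial.aeval q (physHermite n) * star (Polynomial.aeval q (physHermite n))))
      (((1 - s ^ 2) / (2 * Real.pi * s) *
          Real.exp ((1 - s) * q.re ^ 2 + (1 - s) / s * ‖q.im‖ ^ 2)) • (1 : ℍ[ℝ])) := by
  obtain ⟨u, hu, hstar, hq⟩ := exists_unit q
  set φ : ℂ →ₐ[ℝ] ℍ[ℝ] := Complex.liftAux u hu with hφ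
  have hφa : ∀ c : ℂ, φ c = algebraMap ℝ ℍ[ℝ] c.re + c.im • u := fun c =>
    Complex.liftAux_apply u hu c
  have hφs : ∀ c : ℂ, star (φ c) = φ (star c) := by
    intro c
    rw [hφa, hφa, star_add, Quaternion.star_smul, hstar]
    simp [Quaternion.algebraMap_def]
  have hz : φ ⟨q.re, ‖q.im‖⟩ = q := by
    rw [hφa]
    simp only
    rw [← hq, Quaternion.algebraMap_def, Quaternion.re_add_im]
  have hc : Continuous φ := φ.toLinearMap.continuous_of_finiteDimensional
  have := (complex_kernel s hs0 hs1 ⟨q.re, ‖q.im‖⟩).map φ hc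
  rw [map_smul, map_one] at this
  refine this.congr_fun fun n => ?_
  rw [Function.comp_apply, map_smul, map_mul]
  congr 2
  · rw [← aeval_algHom_apply, hz]
  · rw [← aeval_algHom_apply, ← hφs, hz]
    have : aeval q (physHermite n) = φ (aeval ⟨q.re, ‖q.im‖⟩ (physHermite n)) := by
      rw [← aeval_algHom_apply, hz]
    rw [this, hφs]
    have h2 := aeval_conj (K := ℂ) (physHermite n) ⟨q.re, ‖q.im‖⟩
    have h3 : star q = φ (star ⟨q.re, ‖q.im‖⟩) := by rw [← hφs, hz]
    rw [h3, aeval_algHom_apply]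
    congr 1
    exact h2.symm
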